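/- arXiv:2601.09662 — 6 statements merged into one kernel-verified Lean document; each statement's English description precedes it below -/
import Mathlib

section
/- Let n ≥ 1, let g₀ be an invertible real n×n matrix, and let γ : ℝ → ℝⁿ be a smooth map taking values in the unit sphere S^{n-1} and satisfying the quasi-periodicity condition γ(t+1) = (g₀ ·ᵥ γ(t)) / ‖g₀ ·ᵥ γ(t)‖ for all t ∈ ℝ. Then there exist an open neighborhood U of g₀ inside the invertible n×n matrices and a smooth map f : U × ℝ → ℝⁿ with values in the unit sphere, such that f(g₀, t) = γ(t) for all t, and f(h, t+1) = (h ·ᵥ f(h,t)) / ‖h ·ᵥ f(h,t)‖ for all h ∈ U and t ∈ ℝ. (Local sections of the monodromy map.) -/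
/-!
The curve is propagated by the formula `h ^ k * g₀ ^ (-k)` and interpolated between integers.
For `k : ℤ` let `τₖ(h, t) = h ^ k g₀ ^ (-k) γ(t)` (`qpTerm`). Since `γ(t + 1)` is `g₀ γ(t)` up to a
positive scalar `c(t)`, one has `τₖ₊₁(h, t + 1) = c(t) h τₖ(h, t)`, while `τₖ(g₀, t) = γ(t)` for
every `k`. With `T` a smooth step (`0` on `(-∞, 0]`, `1` on `[1, ∞)`) put
`F(h, t) = τₘ + T(t - m) (τₘ₊₁ - τₘ)`, `m = ⌊t⌋` (`qpLift`). Then `F(g₀, t) = γ(t)`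
and `F(h, t + 1) = c(t) h F(h, t)`.

Smoothness of `F` at integers is the point of the interpolation: on `(m - 1, m + 1)`
the function `F` coincides with `τₘ₋₁ + T(t - m + 1) (τₘ - τₘ₋₁) + T(t - m) (τₘ₊₁ - τₘ)`, which is
visibly smooth (`contDiffAt_qpLift`).

Finally `F(g₀, t) = γ(t) ≠ 0`, so by the tube lemma `F(h, t) ≠ 0` for `h` near `g₀` and
`t ∈ [0, 1]`. Vanishing of `F(h, ·)` is a `1`-periodic condition for invertible `h`, so `F` does not
vanish at all over this neighborhood, and `f = F / ‖F‖` is the required family.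
-/

attribute [local instance] Matrix.normedAddCommGroup Matrix.normedSpace

/-- The action of an invertible `n × n` matrix on the unit sphere `S^{n-1} ⊆ ℝⁿ`:
`x ↦ (g ·ᵥ x) / ‖g ·ᵥ x‖` (here without the normalization; `sphereAct` below normalizes). -/
noncomputable def matAct {n : ℕ} (g : Matrix (Fin n) (Fin n) ℝ)
    (x : EuclideanSpace ℝ (Fin n)) : EuclideanSpace ℝ (Fin n) :=
  (WithLp.equiv 2 (Fin n → ℝ)).symm (g.mulVec (WithLp.equiv 2 (Fin n → ℝ) x))

/-- The identification of matrices with operators on Euclidean space, as a continuous linear map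
for the entrywise norm on matrices. -/
noncomputable def matOp (n : ℕ) : Matrix (Fin n) (Fin n) ℝ →L[ℝ]
    (EuclideanSpace ℝ (Fin n) →L[ℝ] EuclideanSpace ℝ (Fin n)) :=
  LinearMap.toContinuousLinearMap
    (Matrix.toEuclideanCLM (n := Fin n) (𝕜 := ℝ)).toAlgEquiv.toLinearMap

theorem matOp_eq {n : ℕ} (h : Matrix (Fin n) (Fin n) ℝ) :
    matOp n h = Matrix.toEuclideanCLM (n := Fin n) (𝕜 := ℝ) h := rfl

theorem matOp_apply {n : ℕ} (h : Matrix (Fin n) (Fin n) ℝ) (x : EuclideanSpace ℝ (Fin n)) :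
    matOp n h x = matAct h x := rfl

theorem matOp_mul {n : ℕ} (a b : Matrix (Fin n) (Fin n) ℝ) :
    matOp n (a * b) = matOp n a * matOp n b := by
  simp only [matOp_eq, map_mul]

theorem matOp_one {n : ℕ} : matOp n (1 : Matrix (Fin n) (Fin n) ℝ) = 1 := by
  simp only [matOp_eq, map_one]

theorem isOpen_setOf_isUnit_matrix (n : ℕ) :
    IsOpen {h : Matrix (Fin n) (Fin n) ℝ | IsUnit h} := by
  have : {h : Matrix (Fin n) (Fin n) ℝ | IsUnit h} = matOp n ⁻¹' {a | IsUnit a} := by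
    ext h
    simp only [Set.mem_ofPred_eq, Set.mem_preimage, matOp_eq]
    exact (MulEquiv.isUnit_map _).symm
  rw [this]
  exact Units.isOpen.preimage (matOp n).continuous

theorem matOp_inv {n : ℕ} {h : Matrix (Fin n) (Fin n) ℝ} (hh : IsUnit h) :
    matOp n h⁻¹ = Ring.inverse (matOp n h) := by
  have hd := (Matrix.isUnit_iff_isUnit_det h).1 hh
  have h1 : matOp n h * matOp n h⁻¹ = 1 := by
    rw [← matOp_mul, Matrix.mul_nonsing_inv _ hd, matOp_one]
  have h2 : matOp n h⁻¹ * matOp n h = 1 := by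
    rw [← matOp_mul, Matrix.nonsing_inv_mul _ hd, matOp_one]
  exact (Ring.inverse_unit ⟨matOp n h, matOp n h⁻¹, h1, h2⟩).symm

theorem contDiffAt_matOp_pow {n : ℕ} {u : Matrix (Fin n) (Fin n) ℝ → Matrix (Fin n) (Fin n) ℝ}
    {g : Matrix (Fin n) (Fin n) ℝ}
    (hu : ContDiffAt ℝ (⊤ : ℕ∞) (fun h => matOp n (u h)) g) (k : ℕ) :
    ContDiffAt ℝ (⊤ : ℕ∞) (fun h => matOp n (u h ^ k)) g := by
  have : (fun h => matOp n (u h ^ k)) = fun h => matOp n (u h) ^ k := by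
    funext h
    simp only [matOp_eq, map_pow]
  rw [this]
  exact hu.pow k

theorem contDiffAt_matOp_zpow {n : ℕ} {g : Matrix (Fin n) (Fin n) ℝ} (hg : IsUnit g) (k : ℤ) :
    ContDiffAt ℝ (⊤ : ℕ∞) (fun h => matOp n (h ^ k)) g := by
  have hinv : ContDiffAt ℝ (⊤ : ℕ∞) (fun h => matOp n h⁻¹) g := by
    have hug : IsUnit (matOp n g) := by
      rw [matOp_eq]
      exact hg.map _
    obtain ⟨a, ha⟩ := hug
    have h1 : ContDiffAt ℝ (⊤ : ℕ∞) (fun h => Ring.inverse (matOp n h)) g := by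
      refine ContDiffAt.comp g (g := Ring.inverse) ?_ (matOp n).contDiff.contDiffAt
      rw [← ha]
      exact contDiffAt_ringInverse ℝ a
    refine h1.congr_of_eventuallyEq ?_
    filter_upwards [(isOpen_setOf_isUnit_matrix n).mem_nhds hg] with h hh
    exact matOp_inv hh
  obtain ⟨m, rfl | rfl⟩ := k.eq_nat_or_neg
  · simp only [zpow_natCast]
    exact contDiffAt_matOp_pow (matOp n).contDiff.contDiffAt m
  · simp only [Matrix.zpow_neg_natCast, ← Matrix.inv_pow']
    exact contDiffAt_matOp_pow hinv m

/-- The vector `h ^ k g₀ ^ (-k) γ(t)`. -/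
noncomputable def qpTerm {n : ℕ} (g₀ : Matrix (Fin n) (Fin n) ℝ)
    (γ : ℝ → EuclideanSpace ℝ (Fin n)) (k : ℤ) (p : Matrix (Fin n) (Fin n) ℝ × ℝ) :
    EuclideanSpace ℝ (Fin n) :=
  matOp n (p.1 ^ k) (matOp n (g₀ ^ (-k)) (γ p.2))

/-- The unnormalized family: on `[m, m + 1)` with `m` an integer, the smooth interpolation from
`qpTerm g₀ γ m` to `qpTerm g₀ γ (m + 1)`. -/
noncomputable def qpLift {n : ℕ} (g₀ : Matrix (Fin n) (Fin n) ℝ)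
    (γ : ℝ → EuclideanSpace ℝ (Fin n)) (p : Matrix (Fin n) (Fin n) ℝ × ℝ) :
    EuclideanSpace ℝ (Fin n) :=
  qpTerm g₀ γ ⌊p.2⌋ p + Real.smoothTransition (p.2 - ⌊p.2⌋) •
    (qpTerm g₀ γ (⌊p.2⌋ + 1) p - qpTerm g₀ γ ⌊p.2⌋ p)

theorem contDiffAt_qpTerm {n : ℕ} (g₀ : Matrix (Fin n) (Fin n) ℝ)
    {γ : ℝ → EuclideanSpace ℝ (Fin n)} (hγ : ContDiff ℝ (⊤ : ℕ∞) γ) (k : ℤ)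
    {p : Matrix (Fin n) (Fin n) ℝ × ℝ} (hp : IsUnit p.1) :
    ContDiffAt ℝ (⊤ : ℕ∞) (qpTerm g₀ γ k) p := by
  have h1 : ContDiffAt ℝ (⊤ : ℕ∞)
      (fun q : Matrix (Fin n) (Fin n) ℝ × ℝ => matOp n (q.1 ^ k)) p :=
    ContDiffAt.comp p (g := fun h => matOp n (h ^ k)) (contDiffAt_matOp_zpow hp k) contDiffAt_fst
  have h2 : ContDiffAt ℝ (⊤ : ℕ∞)
      (fun q : Matrix (Fin n) (Fin n) ℝ × ℝ => matOp n (g₀ ^ (-k)) (γ q.2)) p :=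
    ((matOp n (g₀ ^ (-k))).contDiff.comp (hγ.comp contDiff_snd)).contDiffAt
  exact h1.clm_apply h2

theorem contDiffAt_qpLift {n : ℕ} (g₀ : Matrix (Fin n) (Fin n) ℝ)
    {γ : ℝ → EuclideanSpace ℝ (Fin n)} (hγ : ContDiff ℝ (⊤ : ℕ∞) γ)
    {p : Matrix (Fin n) (Fin n) ℝ × ℝ} (hp : IsUnit p.1) :
    ContDiffAt ℝ (⊤ : ℕ∞) (qpLift g₀ γ) p := by
  set m : ℤ := ⌊p.2⌋ with hm
  have hT : ∀ a : ℝ, ContDiffAt ℝ (⊤ : ℕ∞)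
      (fun q : Matrix (Fin n) (Fin n) ℝ × ℝ => Real.smoothTransition (q.2 - a)) p := fun a =>
    (Real.smoothTransition.contDiff.comp (contDiff_snd.sub contDiff_const)).contDiffAt
  have hτ := fun k => contDiffAt_qpTerm g₀ hγ k hp
  -- The sum of the two interpolations, smooth across `t = m`.
  have hG : ContDiffAt ℝ (⊤ : ℕ∞) (fun q => qpTerm g₀ γ (m - 1) q +
      Real.smoothTransition (q.2 - ((m : ℝ) - 1)) • (qpTerm g₀ γ m q - qpTerm g₀ γ (m - 1) q) +
      Real.smoothTransition (q.2 - m) • (qpTerm g₀ γ (m + 1) q - qpTerm g₀ γ m q)) p :=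
    ((hτ _).add ((hT _).smul ((hτ _).sub (hτ _)))).add ((hT _).smul ((hτ _).sub (hτ _)))
  refine hG.congr_of_eventuallyEq ?_
  have h1 : (m : ℝ) ≤ p.2 := Int.floor_le _
  have h2 : p.2 < m + 1 := Int.lt_floor_add_one _
  have hnhds : Prod.snd ⁻¹' Set.Ioo ((m : ℝ) - 1) (m + 1) ∈ nhds p :=
    (isOpen_Ioo.preimage continuous_snd).mem_nhds ⟨by linarith, h2⟩
  filter_upwards [hnhds] with q hq
  obtain ⟨hq1, hq2⟩ := hq
  rcases lt_or_ge q.2 m with hlt | hge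
  · have hfl : ⌊q.2⌋ = m - 1 := by
      rw [Int.floor_eq_iff]
      push_cast
      constructor <;> linarith
    rw [qpLift, hfl, Real.smoothTransition.zero_of_nonpos (x := q.2 - m) (by linarith)]
    simp
  · have hfl : ⌊q.2⌋ = m := by
      rw [Int.floor_eq_iff]
      exact ⟨hge, hq2⟩
    rw [qpLift, hfl,
      Real.smoothTransition.one_of_one_le (x := q.2 - ((m : ℝ) - 1)) (by linarith)]
    simp

theorem qpTerm_base {n : ℕ} {g₀ : Matrix (Fin n) (Fin n) ℝ} (hg₀ : IsUnit g₀)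
    (γ : ℝ → EuclideanSpace ℝ (Fin n)) (k : ℤ) (t : ℝ) : qpTerm g₀ γ k (g₀, t) = γ t := by
  have hd := (Matrix.isUnit_iff_isUnit_det g₀).1 hg₀
  have h1 : matOp n (g₀ ^ k) * matOp n (g₀ ^ (-k)) = 1 := by
    rw [← matOp_mul, ← Matrix.zpow_add hd, add_neg_cancel, zpow_zero, matOp_one]
  exact congrArg (fun a => a (γ t)) h1

theorem qpLift_base {n : ℕ} {g₀ : Matrix (Fin n) (Fin n) ℝ} (hg₀ : IsUnit g₀)
    (γ : ℝ → EuclideanSpace ℝ (Fin n)) (t : ℝ) : qpLift g₀ γ (g₀, t) = γ t := by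
  simp [qpLift, qpTerm_base hg₀]

theorem qpTerm_add_one {n : ℕ} {g₀ h : Matrix (Fin n) (Fin n) ℝ} (hg₀ : IsUnit g₀) (hh : IsUnit h)
    {γ : ℝ → EuclideanSpace ℝ (Fin n)} {t c : ℝ} (hγ : γ (t + 1) = c • matOp n g₀ (γ t)) (k : ℤ) :
    qpTerm g₀ γ (k + 1) (h, t + 1) = c • matOp n h (qpTerm g₀ γ k (h, t)) := by
  have hd := (Matrix.isUnit_iff_isUnit_det g₀).1 hg₀
  have hd' := (Matrix.isUnit_iff_isUnit_det h).1 hh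
  have h1 : h ^ (k + 1) = h * h ^ k := by rw [add_comm, Matrix.zpow_one_add hd']
  have h2 : g₀ ^ (-k) = g₀ ^ (-(k + 1)) * g₀ := by
    rw [← Matrix.zpow_add_one hd]
    congr 1
    ring
  simp only [qpTerm, hγ, h1, h2, matOp_mul, map_smul, mul_apply_eq_comp]

theorem qpLift_add_one {n : ℕ} {g₀ h : Matrix (Fin n) (Fin n) ℝ} (hg₀ : IsUnit g₀) (hh : IsUnit h)
    {γ : ℝ → EuclideanSpace ℝ (Fin n)} {t c : ℝ} (hγ : γ (t + 1) = c • matOp n g₀ (γ t)) :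
    qpLift g₀ γ (h, t + 1) = c • matOp n h (qpLift g₀ γ (h, t)) := by
  have h1 : t + 1 - ((⌊t⌋ + 1 : ℤ) : ℝ) = t - ⌊t⌋ := by
    push_cast
    ring
  simp only [qpLift, Int.floor_add_one, h1, qpTerm_add_one hg₀ hh hγ, map_add, map_smul, map_sub,
    smul_add, smul_sub, smul_comm c]

theorem matOp_apply_ne_zero {n : ℕ} {h : Matrix (Fin n) (Fin n) ℝ} (hh : IsUnit h)
    {x : EuclideanSpace ℝ (Fin n)} (hx : x ≠ 0) : matOp n h x ≠ 0 := by
  intro h0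
  have hd := (Matrix.isUnit_iff_isUnit_det h).1 hh
  have h2 : matOp n h⁻¹ * matOp n h = 1 := by
    rw [← matOp_mul, Matrix.nonsing_inv_mul _ hd, matOp_one]
  have h3 : matOp n h⁻¹ (matOp n h x) = x := congrArg (fun a => a x) h2
  rw [h0, map_zero] at h3
  exact hx h3.symm

/-- Local sections of the monodromy map: a smooth quasi-periodic sphere-valued curve with
monodromy `g₀` extends to a smooth family of quasi-periodic curves with monodromies ranging
over a neighborhood `U` of `g₀` in the invertible matrices. -/
theorem stmt0 (n : ℕ) (hn : 1 ≤ n) (g₀ : Matrix (Fin n) (Fin n) ℝ) (hg₀ : IsUnit g₀)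
    (γ : ℝ → EuclideanSpace ℝ (Fin n)) (hγsmooth : ContDiff ℝ (⊤ : ℕ∞) γ)
    (hγsphere : ∀ t, ‖γ t‖ = 1)
    (hγqp : ∀ t, γ (t + 1) = ‖matAct g₀ (γ t)‖⁻¹ • matAct g₀ (γ t)) :
    ∃ (U : Set (Matrix (Fin n) (Fin n) ℝ))
      (f : Matrix (Fin n) (Fin n) ℝ × ℝ → EuclideanSpace ℝ (Fin n)),
      IsOpen U ∧ g₀ ∈ U ∧ (∀ g ∈ U, IsUnit g) ∧
      ContDiffOn ℝ (⊤ : ℕ∞) f (U ×ˢ (Set.univ : Set ℝ)) ∧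
      (∀ t, f (g₀, t) = γ t) ∧
      (∀ h ∈ U, ∀ t, ‖f (h, t)‖ = 1) ∧
      (∀ h ∈ U, ∀ t, f (h, t + 1) = ‖matAct h (f (h, t))‖⁻¹ • matAct h (f (h, t))) := by
  simp only [← matOp_apply] at hγqp ⊢
  have hγ0 : ∀ t, γ t ≠ 0 := fun t h0 => by simpa [h0] using hγsphere t
  have hc : ∀ t, 0 < ‖matOp n g₀ (γ t)‖⁻¹ := fun t =>
    inv_pos.2 (norm_pos_iff.2 (matOp_apply_ne_zero hg₀ (hγ0 t)))
  have hVo : IsOpen ({h : Matrix (Fin n) (Fin n) ℝ | IsUnit h} ×ˢ (Set.univ : Set ℝ)) :=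
    (isOpen_setOf_isUnit_matrix n).prod isOpen_univ
  have hcont : ContinuousOn (qpLift g₀ γ)
      ({h : Matrix (Fin n) (Fin n) ℝ | IsUnit h} ×ˢ (Set.univ : Set ℝ)) := fun p hp =>
    (contDiffAt_qpLift g₀ hγsmooth hp.1).continuousAt.continuousWithinAt
  have hNo := hcont.isOpen_inter_preimage hVo (isOpen_compl_singleton (x := 0))
  obtain ⟨U, W, hU, -, hgU, hIW, hUW⟩ := generalized_tube_lemma
    (isCompact_singleton (x := g₀)) (isCompact_Icc (a := (0 : ℝ)) (b := 1)) hNo (by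
      rintro ⟨h, t⟩ ⟨rfl, -⟩
      refine ⟨⟨hg₀, Set.mem_univ _⟩, ?_⟩
      simpa [qpLift_base hg₀] using hγ0 t)
  have hunit : ∀ h ∈ U, IsUnit h := fun h hh =>
    (hUW (Set.mk_mem_prod hh (hIW (Set.left_mem_Icc.2 zero_le_one)))).1.1
  have hne : ∀ h ∈ U, ∀ t, qpLift g₀ γ (h, t) ≠ 0 := by
    intro h hh t
    have hper : Function.Periodic (fun t => qpLift g₀ γ (h, t) ≠ 0) (1 : ℝ) := by
      intro s
      simp only [eq_iff_iff]
      rw [qpLift_add_one hg₀ (hunit h hh) (hγqp s)]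
      refine ⟨fun h1 h2 => h1 (by simp [h2]), fun h1 => ?_⟩
      exact smul_ne_zero (hc s).ne' (matOp_apply_ne_zero (hunit h hh) h1)
    obtain ⟨y, hy, hty⟩ := hper.exists_mem_Ico₀ one_pos t
    exact hty.mpr (hUW (Set.mk_mem_prod hh (hIW (Set.Ico_subset_Icc_self hy)))).2
  refine ⟨U, fun p => ‖qpLift g₀ γ p‖⁻¹ • qpLift g₀ γ p, hU, hgU rfl, hunit, ?_, ?_, ?_, ?_⟩
  · rintro ⟨h, t⟩ ⟨hh, -⟩
    have hF := contDiffAt_qpLift g₀ hγsmooth (p := (h, t)) (hunit h hh)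
    exact (((hF.norm ℝ (hne h hh t)).inv (norm_ne_zero_iff.2 (hne h hh t))).smul
      hF).contDiffWithinAt
  · intro t
    simp [qpLift_base hg₀, hγsphere]
  · intro h hh t
    exact norm_smul_inv_norm (𝕜 := ℝ) (hne h hh t)
  · intro h hh t
    have hF := norm_pos_iff.2 (hne h hh t)
    have hA := norm_pos_iff.2 (matOp_apply_ne_zero (hunit h hh) (hne h hh t))
    have hct := hc t
    simp only [qpLift_add_one hg₀ (hunit h hh) (hγqp t)]
    -- Positive scalars commute with `matOp n h` and cancel under normalization.
    generalize ‖matOp n g₀ (γ t)‖⁻¹ = c at hct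
    simp only [map_smul, norm_smul, norm_inv, norm_norm, Real.norm_of_nonneg hct.le, smul_smul]
    congr 1
    field_simp
end

section
/- Let n ≥ 1, let ξ : ℝ → Matrix n n ℝ be a map, and let v₁, …, vₙ : ℝ → ℝⁿ be differentiable curves such that v₁(t) = e₁ (the first standard basis vector) for all t, and v_{i+1}(t) = vᵢ'(t) + ξ(t) ·ᵥ vᵢ(t) for 1 ≤ i ≤ n−1. Assume that for every i = 1,…,n and every t ∈ ℝ, the vector vᵢ(t) lies in the span of e₁,…,eᵢ and its i-th coordinate is strictly positive. Then for every t ∈ ℝ and every i with 1 ≤ i ≤ n−1, the matrix entries ξ(t)_{j,i} vanish for all j > i+1, and ξ(t)_{i+1,i} > 0. (Key step in the Drinfeld–Sokolov normal form: a connection 1-form ξ dt whose horizontal curve is nondegenerate with the standard flag lift is lower-Hessenberg with positive subdiagonal in its first n−1 columns.) -/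
/-! Compare `j`-th coordinates in `v_{i+1} = vᵢ' + ξ vᵢ` for `j > i`. The coordinate `(vᵢ)_j` vanishes
identically in `t`, so `vᵢ'` contributes nothing. In `(ξ vᵢ)_j = ∑ₖ ξ_{jk} (vᵢ)ₖ` the terms with `k > i`
vanish by the flag condition, and those with `k < i` because the earlier columns already vanish below the
subdiagonal (strong induction on the column). Hence `(v_{i+1})_j = ξ_{ji} (vᵢ)ᵢ` with `(vᵢ)ᵢ > 0`; the
left side is `0` for `j > i + 1` and positive for `j = i + 1`. -/

/-- Key step in the Drinfeld–Sokolov normal form: if `v₁ = e₁` and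
`v_{i+1} = vᵢ' + ξ vᵢ`, and each `vᵢ(t)` lies in the span of `e₁, …, eᵢ` with strictly
positive `i`-th coordinate, then in its first `n-1` columns the matrix `ξ(t)` vanishes
below the subdiagonal and has strictly positive subdiagonal entries. -/
theorem stmt1 (n : ℕ) (hn : 1 ≤ n) (ξ : ℝ → Matrix (Fin n) (Fin n) ℝ)
    (v : Fin n → ℝ → (Fin n → ℝ))
    (hdiff : ∀ i, Differentiable ℝ (v i))
    (hv0 : ∀ t, v ⟨0, hn⟩ t = Pi.single (⟨0, hn⟩ : Fin n) 1)
    (hrec : ∀ (i : ℕ) (hi : i + 1 < n) (t : ℝ),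
      v ⟨i + 1, hi⟩ t
        = deriv (v ⟨i, Nat.lt_of_succ_lt hi⟩) t
          + (ξ t).mulVec (v ⟨i, Nat.lt_of_succ_lt hi⟩ t))
    (hflag : ∀ (i : Fin n) (t : ℝ),
      (∀ j : Fin n, (i : ℕ) < (j : ℕ) → v i t j = 0) ∧ 0 < v i t i) :
    ∀ (t : ℝ) (i : ℕ) (hi : i + 1 < n),
      (∀ j : Fin n, i + 1 < (j : ℕ) → ξ t j ⟨i, Nat.lt_of_succ_lt hi⟩ = 0) ∧
      0 < ξ t ⟨i + 1, hi⟩ ⟨i, Nat.lt_of_succ_lt hi⟩ := by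
  intro t i
  induction i using Nat.strong_induction_on with
  | _ i ih =>
    intro hi
    have hi' : i < n := Nat.lt_of_succ_lt hi
    have hderiv : ∀ j : Fin n, i < (j : ℕ) → deriv (v ⟨i, hi'⟩) t j = 0 := by
      intro j hj
      have h := (hasDerivAt_pi.1 (hdiff ⟨i, hi'⟩ t).hasDerivAt) j
      have hzero : (fun s => v ⟨i, hi'⟩ s j) = fun _ => (0 : ℝ) :=
        funext fun s => (hflag ⟨i, hi'⟩ s).1 j hj
      rw [hzero] at h
      exact h.unique (hasDerivAt_const t (0 : ℝ))
    have key : ∀ j : Fin n, i < (j : ℕ) →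
        v ⟨i + 1, hi⟩ t j = ξ t j ⟨i, hi'⟩ * v ⟨i, hi'⟩ t ⟨i, hi'⟩ := by
      intro j hj
      rw [hrec i hi t, Pi.add_apply, hderiv j hj, zero_add, Matrix.mulVec, dotProduct]
      refine Finset.sum_eq_single _ (fun k _ hk => ?_) (by simp)
      have hne : (k : ℕ) ≠ i := fun h => hk (Fin.ext h)
      rcases lt_or_gt_of_ne hne with hlt | hgt
      · have hcol := (ih k hlt (by omega)).1 j (by omega)
        rw [Fin.eta] at hcol
        rw [hcol, zero_mul]
      · rw [(hflag ⟨i, hi'⟩ t).1 k hgt, mul_zero]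
    have hpos : 0 < v ⟨i, hi'⟩ t ⟨i, hi'⟩ := (hflag ⟨i, hi'⟩ t).2
    refine ⟨fun j hj => ?_, ?_⟩
    · have h := key j (by omega)
      rw [(hflag ⟨i + 1, hi⟩ t).1 j hj] at h
      exact (mul_eq_zero.1 h.symm).resolve_right hpos.ne'
    · have h := (hflag ⟨i + 1, hi⟩ t).2
      rw [key ⟨i + 1, hi⟩ (Nat.lt_succ_self i)] at h
      exact pos_of_mul_pos_left h hpos.le
end

section
/- Let d₁, d₂, d₃ > 0 and let γ : ℝ → ℝ³ be a map with γ(t) ≠ 0 for all t, satisfying the quasi-periodicity condition: there is a function λ : ℝ → ℝ with λ(t) > 0 such that γᵢ(t+1) = λ(t)·dᵢ·γᵢ(t) for all t ∈ ℝ and i = 1,2,3. Assume γ is (globally) convex in the sense that for every nonzero linear functional φ on ℝ³, the set {t ∈ ℝ : φ(γ(t)) = 0} has at most two elements. Then each coordinate function t ↦ γᵢ(t) (i = 1,2,3) is nowhere zero; if moreover γ is continuous, each coordinate function has constant sign, so γ takes values in a single open coordinate octant of ℝ³ ∖ {0}. (A convex quasi-periodic curve with positive diagonal monodromy avoids the coordinate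 great circles.) -/
/-- A (globally) convex quasi-periodic curve in `ℝ³ ∖ {0}` with positive diagonal monodromy
avoids the coordinate planes; if continuous, each coordinate has constant sign, so the curve
stays in a single open coordinate octant. -/
theorem stmt2 (d : Fin 3 → ℝ) (hd : ∀ i, 0 < d i)
    (γ : ℝ → Fin 3 → ℝ) (hγne : ∀ t, γ t ≠ 0)
    (l : ℝ → ℝ) (hl : ∀ t, 0 < l t)
    (hqp : ∀ (t : ℝ) (i : Fin 3), γ (t + 1) i = l t * d i * γ t i)
    (hconv : ∀ φ : (Fin 3 → ℝ) →ₗ[ℝ] ℝ, φ ≠ 0 →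
      ∀ a b c : ℝ, φ (γ a) = 0 → φ (γ b) = 0 → φ (γ c) = 0 →
        a = b ∨ a = c ∨ b = c) :
    (∀ (t : ℝ) (i : Fin 3), γ t i ≠ 0) ∧
    (Continuous γ → ∀ i : Fin 3, (∀ t, 0 < γ t i) ∨ (∀ t, γ t i < 0)) := by
  have hne : ∀ (t : ℝ) (i : Fin 3), γ t i ≠ 0 := by
    intro t i h0
    -- By quasi-periodicity a zero of the `i`-th coordinate at `t` recurs at `t + 1` and `t + 2`,
    -- so the coordinate plane `xᵢ = 0` meets the curve at three distinct parameters.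
    have h1 : γ (t + 1) i = 0 := by rw [hqp, h0, mul_zero]
    have h2 : γ (t + 1 + 1) i = 0 := by rw [hqp, h1, mul_zero]
    have hφ : (LinearMap.proj i : (Fin 3 → ℝ) →ₗ[ℝ] ℝ) ≠ 0 := by
      intro h
      simpa using LinearMap.congr_fun h (fun _ => (1 : ℝ))
    rcases hconv (LinearMap.proj i) hφ t (t + 1) (t + 1 + 1) h0 h1 h2 with h | h | h <;> linarith
  refine ⟨hne, fun hc i => ?_⟩
  have hci : Continuous fun t => γ t i := (continuous_apply i).comp hc
  by_contra! hcon
  obtain ⟨⟨a, ha⟩, ⟨b, hb⟩⟩ := hcon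
  obtain ⟨t, ht⟩ := mem_range_of_exists_le_of_exists_ge hci ⟨a, ha⟩ ⟨b, hb⟩
  exact hne t i ht
end

section
/- Let c₁ < c₂ < c₃ be real numbers with c₁ + c₂ + c₃ = 0, and let δ : ℝ → ℝ be a twice-differentiable function. Set u₁(t) = e^{c₁ t}, u₂(t) = δ(t)·e^{c₂ t}, u₃(t) = e^{c₃ t}. Then the Wronskian W₃(u₁, u₂, u₃)(t) equals −(c₃ − c₁)·(δ''(t) + 3c₂·δ'(t) − (c₂ − c₁)(c₃ − c₂)·δ(t)) for every t. Consequently, W₃(u₁,u₂,u₃)(t) > 0 for all t if and only if δ''(t) + 3c₂·δ'(t) − (c₂ − c₁)(c₃ − c₂)·δ(t) < 0 for all t. (Convexity/nondegeneracy criterion for curves γ(t) = (e^{tc₁} : δ(t)e^{tc₂} : e^{tc₃}) in S².) -/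
/-!
Each of the three functions has the form `f(t) e^{ct}`, and differentiating such a function replaces
`f` by `f' + c f`. So `e^{c₁t}`, `e^{c₂t}`, `e^{c₃t}` factor out of the columns of the Wronskian, and
their product is `1` since `c₁ + c₂ + c₃ = 0`. What remains is a polynomial `3 × 3` determinant in
`δ, δ', δ''`, equal to the claimed expression after eliminating `c₃ = -c₁ - c₂`. The positivity
criterion follows because `c₃ - c₁ > 0`.
-/

theorem deriv_mul_exp_linear (c : ℝ) (f : ℝ → ℝ) (hf : Differentiable ℝ f) :
    deriv (fun t => f t * Real.exp (c * t)) =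
      fun t => (deriv f t + c * f t) * Real.exp (c * t) := by
  funext t
  have h : HasDerivAt (fun t => Real.exp (c * t)) (Real.exp (c * t) * (c * 1)) t :=
    ((hasDerivAt_id t).const_mul c).exp
  rw [deriv_fun_mul (hf t) h.differentiableAt, h.deriv]
  ring

theorem deriv_exp_linear (c : ℝ) :
    deriv (fun t => Real.exp (c * t)) = fun t => c * Real.exp (c * t) := by
  simpa using deriv_mul_exp_linear c (fun _ => 1) (differentiable_const 1)

theorem deriv_deriv_exp_linear (c : ℝ) :
    deriv (deriv fun t => Real.exp (c * t)) = fun t => c ^ 2 * Real.exp (c * t) := by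
  rw [deriv_exp_linear, deriv_mul_exp_linear c (fun _ => c) (differentiable_const c)]
  funext t
  simp only [deriv_const]
  ring

theorem deriv_deriv_mul_exp_linear (c : ℝ) (f : ℝ → ℝ) (hf : Differentiable ℝ f)
    (hf' : Differentiable ℝ (deriv f)) :
    deriv (deriv fun t => f t * Real.exp (c * t)) =
      fun t => (deriv (deriv f) t + 2 * c * deriv f t + c ^ 2 * f t) * Real.exp (c * t) := by
  rw [deriv_mul_exp_linear c f hf,
    deriv_mul_exp_linear c (fun t => deriv f t + c * f t) (hf'.add (hf.const_mul c))]
  funext t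
  rw [deriv_fun_add (hf' t) ((hf t).const_mul c), deriv_const_mul c (hf t)]
  ring

/-- For `u₁ = e^{c₁t}`, `u₂ = δ·e^{c₂t}`, `u₃ = e^{c₃t}` with `c₁ < c₂ < c₃` and
`c₁ + c₂ + c₃ = 0`, the Wronskian `W₃(u₁,u₂,u₃)` equals
`−(c₃−c₁)(δ'' + 3c₂δ' − (c₂−c₁)(c₃−c₂)δ)`; hence it is everywhere positive iff
`δ'' + 3c₂δ' − (c₂−c₁)(c₃−c₂)δ < 0` everywhere. -/
theorem stmt5 (c₁ c₂ c₃ : ℝ) (h12 : c₁ < c₂) (h23 : c₂ < c₃) (hsum : c₁ + c₂ + c₃ = 0)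
    (δ : ℝ → ℝ) (hδ : Differentiable ℝ δ) (hδ' : Differentiable ℝ (deriv δ))
    (u₁ u₂ u₃ : ℝ → ℝ)
    (hu₁ : u₁ = fun t => Real.exp (c₁ * t))
    (hu₂ : u₂ = fun t => δ t * Real.exp (c₂ * t))
    (hu₃ : u₃ = fun t => Real.exp (c₃ * t)) :
    (∀ t : ℝ,
      (!![u₁ t, u₂ t, u₃ t;
          deriv u₁ t, deriv u₂ t, deriv u₃ t;
          deriv (deriv u₁) t, deriv (deriv u₂) t, deriv (deriv u₃) t]).det
        = -(c₃ - c₁) *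
            (deriv (deriv δ) t + 3 * c₂ * deriv δ t - (c₂ - c₁) * (c₃ - c₂) * δ t)) ∧
    ((∀ t : ℝ, 0 <
      (!![u₁ t, u₂ t, u₃ t;
          deriv u₁ t, deriv u₂ t, deriv u₃ t;
          deriv (deriv u₁) t, deriv (deriv u₂) t, deriv (deriv u₃) t]).det)
      ↔ ∀ t : ℝ,
          deriv (deriv δ) t + 3 * c₂ * deriv δ t - (c₂ - c₁) * (c₃ - c₂) * δ t < 0) := by
  have key : ∀ t : ℝ,
      (!![u₁ t, u₂ t, u₃ t;
          deriv u₁ t, deriv u₂ t, deriv u₃ t;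
          deriv (deriv u₁) t, deriv (deriv u₂) t, deriv (deriv u₃) t]).det
        = -(c₃ - c₁) *
            (deriv (deriv δ) t + 3 * c₂ * deriv δ t - (c₂ - c₁) * (c₃ - c₂) * δ t) := by
    intro t
    have hexp : Real.exp (c₁ * t) * Real.exp (c₂ * t) * Real.exp (c₃ * t) = 1 := by
      rw [← Real.exp_add, ← Real.exp_add, ← add_mul, ← add_mul, hsum, zero_mul, Real.exp_zero]
    rw [hu₁, hu₂, hu₃, deriv_deriv_exp_linear, deriv_deriv_exp_linear,
      deriv_deriv_mul_exp_linear c₂ δ hδ hδ', deriv_exp_linear, deriv_exp_linear,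
      deriv_mul_exp_linear c₂ δ hδ, Matrix.det_fin_three]
    simp only [Matrix.of_apply, Matrix.cons_val', Matrix.cons_val_zero, Matrix.cons_val_one,
      Matrix.cons_val]
    generalize Real.exp (c₁ * t) = x at hexp ⊢
    generalize Real.exp (c₂ * t) = y at hexp ⊢
    generalize Real.exp (c₃ * t) = z at hexp ⊢
    obtain rfl : c₃ = -c₁ - c₂ := by linarith
    linear_combination (-(-c₁ - c₂ - c₁) *
      (deriv (deriv δ) t + 3 * c₂ * deriv δ t - (c₂ - c₁) * (-c₁ - c₂ - c₂) * δ t)) * hexp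
  refine ⟨key, forall_congr' fun t => ?_⟩
  rw [key t, neg_mul, neg_pos]
  exact smul_neg_iff_of_pos_left (sub_pos.2 (h12.trans h23))
end

section
/- Let c₁ < c₂ < c₃ be real numbers with c₁ + c₂ + c₃ = 0, let g = diag(e^{c₁}, e^{c₂}, e^{c₃}), and define Φ : ℝ² → ℝ³ by Φ(x,y) = (e^{x c₁}, −y·e^{x c₂}, e^{x c₃}). Then: (1) Φ(x+1, y) = g ·ᵥ Φ(x,y) for all (x,y); (2) Φ is injective modulo positive scalars: if Φ(x,y) = λ·Φ(x',y') with λ > 0 then (x,y) = (x',y'); (3) the positive-scalar saturation of the image of Φ is exactly {v ∈ ℝ³ : v₁ > 0 and v₃ > 0}, i.e., for every v ∈ ℝ³ with v₁ > 0 and v₃ > 0 there exist (x,y) ∈ ℝ² and λ > 0 with λ·Φ(x,y) = v. (The developing map of the principal annulus of monodromy g is an embedding of ℝ² onto the convex region Ω = {(x₁:x₂:x₃) ∈ S² : x₁ > 0, x₃ > 0}, intertwining (x,y) ↦ (x+1,y) with the action of g.) -/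
/-!
On the first and third coordinates, `log v₃ - log v₁` is unchanged by positive scaling of `v` and
equals `x * (c₃ - c₁)` at `v = Φ x y`. Since `c₁ < c₃`, this invariant determines `x`, and every
real value is attained. The first coordinate then determines the scalar, and the middle coordinate,
which is a nonzero multiple of `y`, determines `y`. Equivariance is `exp (c + x * c) =
exp c * exp (x * c)` in each coordinate.
-/

/-- The developing map `Φ(x,y) = (e^{xc₁}, −y·e^{xc₂}, e^{xc₃})` of the principal annulus of
monodromy `g = diag(e^{c₁},e^{c₂},e^{c₃})`: it intertwines `(x,y) ↦ (x+1,y)` with the action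
of `g`, is injective modulo positive scalars, and its positive-scalar saturation is exactly
the convex region `{v : v₁ > 0, v₃ > 0}`. -/
theorem stmt9 (c₁ c₂ c₃ : ℝ) (h12 : c₁ < c₂) (h23 : c₂ < c₃) (hsum : c₁ + c₂ + c₃ = 0)
    (Φ : ℝ → ℝ → Fin 3 → ℝ)
    (hΦ : ∀ x y, Φ x y
      = ![Real.exp (x * c₁), -y * Real.exp (x * c₂), Real.exp (x * c₃)])
    (g : Matrix (Fin 3) (Fin 3) ℝ)
    (hg : g = Matrix.diagonal ![Real.exp c₁, Real.exp c₂, Real.exp c₃]) :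
    (∀ x y, Φ (x + 1) y = g.mulVec (Φ x y)) ∧
    (∀ x y x' y' (l : ℝ), 0 < l → Φ x y = l • Φ x' y' → x = x' ∧ y = y') ∧
    (∀ v : Fin 3 → ℝ, 0 < v 0 → 0 < v 2 →
      ∃ (x y l : ℝ), 0 < l ∧ l • Φ x y = v) := by
  have hc : 0 < c₃ - c₁ := by linarith
  refine ⟨?_, ?_, ?_⟩
  · intro x y
    ext i
    fin_cases i <;> simp [hΦ, hg, Matrix.mulVec_diagonal, add_mul, Real.exp_add] <;> ring
  · intro x y x' y' l hl h
    have h0 := congrFun h 0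
    have h1 := congrFun h 1
    have h2 := congrFun h 2
    simp [hΦ] at h0 h1 h2
    have e0 := congrArg Real.log h0
    have e2 := congrArg Real.log h2
    rw [Real.log_mul hl.ne' (Real.exp_ne_zero _), Real.log_exp, Real.log_exp] at e0 e2
    have hx : x = x' := mul_right_cancel₀ hc.ne' (by linarith)
    subst hx
    have hl1 : l = 1 := mul_right_cancel₀ (Real.exp_ne_zero (x * c₁)) (by linarith)
    subst hl1
    exact ⟨rfl, mul_right_cancel₀ (Real.exp_ne_zero (x * c₂)) (by linarith)⟩
  · intro v hv0 hv2
    obtain ⟨x, hx⟩ : ∃ x : ℝ, x * (c₃ - c₁) = Real.log (v 2) - Real.log (v 0) :=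
      ⟨_, div_mul_cancel₀ _ hc.ne'⟩
    refine ⟨x, -(v 1 / (Real.exp (Real.log (v 0) - x * c₁) * Real.exp (x * c₂))),
      Real.exp (Real.log (v 0) - x * c₁), Real.exp_pos _, ?_⟩
    ext i
    fin_cases i
    · simp [hΦ, ← Real.exp_add, Real.exp_log hv0]
    · simp [hΦ]
      field_simp
    · have e : Real.log (v 0) - x * c₁ + x * c₃ = Real.log (v 2) := by linarith
      simp [hΦ, ← Real.exp_add, e, Real.exp_log hv2]
end

section
/- Let n ≥ 2 and let u₁, …, uₙ : ℝ → ℝ be smooth functions whose Wronskian Wₙ(u₁,…,uₙ) is a nonzero constant W. For an n-times differentiable function u : ℝ → ℝ, define (Lu)(t) = (−1)ⁿ · W_{n+1}(u, u₁, …, uₙ)(t) / W, where W_{n+1}(u,u₁,…,uₙ)(t) is the determinant of the (n+1)×(n+1) matrix whose columns are the derivatives of orders 0,…,n of u, u₁, …, uₙ. Then: (1) L uⱼ = 0 for each j = 1,…,n; and (2) there exist functions b₀, …, b_{n−2} : ℝ → ℝ such that for every n-times differentiable u, (Lu)(t) = u^{(n)}(t) + Σ_{i=0}^{n−2} bᵢ(t)·u^{(i)}(t);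 in particular the coefficient of u^{(n−1)} vanishes. (Every nondegenerate curve (u₁ : ⋯ : uₙ), represented by a fundamental system with constant Wronskian, determines an operator L ∈ Rₙ with principal symbol 1 and vanishing subprincipal symbol via L(u) = (−1)ⁿ W_{n+1}(u,u₁,…,uₙ)/Wₙ(u₁,…,uₙ).) -/
/-! Part (1) holds because the determinant defining `L uⱼ` has two equal columns.

For part (2), expand `W_{n+1}(v, u₁, …, uₙ)` along the column of `v`. The coefficient of `v^{(p)}`
is, up to sign, the determinant of the derivatives of `u₁, …, uₙ` of all orders `0, …, n` except
`p`. For `p = n` this minor is the Wronskian `W`, so the leading coefficient is `1`. For `p = n - 1`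
it is the derivative of the Wronskian: differentiating `det` row by row (`hasDerivAt_det`), each
row but the last turns into a copy of its successor and contributes `0`. Since the Wronskian is
constant, this minor vanishes. The remaining minors give the `bᵢ`. -/

/-- The derivative of a determinant, row by row. -/
lemma hasDerivAt_det {m : ℕ} (M M' : ℝ → Matrix (Fin m) (Fin m) ℝ) (t : ℝ)
    (h : ∀ i j, HasDerivAt (fun s => M s i j) (M' t i j) t) :
    HasDerivAt (fun s => (M s).det) (∑ i, ((M t).updateRow i (M' t i)).det) t := by
  have key : ∀ A : Matrix (Fin m) (Fin m) ℝ,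
      A.det = ∑ σ : Equiv.Perm (Fin m), ((Equiv.Perm.sign σ : ℤ) : ℝ) * ∏ i, A i (σ i) := by
    intro A
    rw [← Matrix.det_transpose, Matrix.det_apply']
    rfl
  simp only [key]
  rw [Finset.sum_comm]
  refine HasDerivAt.fun_sum fun σ _ => ?_
  rw [← Finset.mul_sum]
  refine HasDerivAt.const_mul _ ?_
  convert HasDerivAt.fun_finsetProd (u := Finset.univ) (fun i _ => h i (σ i)) using 1
  refine Finset.sum_congr rfl fun i _ => ?_
  rw [← Finset.prod_erase_mul _ _ (Finset.mem_univ i), smul_eq_mul, Matrix.updateRow_self]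
  congr 1
  refine Finset.prod_congr rfl fun k hk => ?_
  rw [Matrix.updateRow_ne (Finset.ne_of_mem_erase hk)]

/-- The determinant of the derivatives of the `u j` of orders `0, …, m` with order `p` omitted. -/
noncomputable def wronskianMinor {m : ℕ} (u : Fin m → ℝ → ℝ) (p : ℕ) (t : ℝ) : ℝ :=
  (Matrix.of fun i j : Fin m =>
    iteratedDeriv (if (i : ℕ) < p then (i : ℕ) else (i : ℕ) + 1) (u j) t).det

/-- Omitting the next-to-top order gives the derivative of the Wronskian. -/
lemma hasDerivAt_wronskian {m : ℕ} (u : Fin (m + 1) → ℝ → ℝ)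
    (hu : ∀ j, ContDiff ℝ (⊤ : ℕ∞) (u j)) (t : ℝ) :
    HasDerivAt (fun s => (Matrix.of fun i j : Fin (m + 1) => iteratedDeriv (i : ℕ) (u j) s).det)
      (wronskianMinor u m t) t := by
  have h := hasDerivAt_det
    (fun s => Matrix.of fun i j : Fin (m + 1) => iteratedDeriv (i : ℕ) (u j) s)
    (fun s => Matrix.of fun i j : Fin (m + 1) => iteratedDeriv ((i : ℕ) + 1) (u j) s) t
    (by
      intro i j
      simp only [Matrix.of_apply, iteratedDeriv_succ]
      exact ((hu j).differentiable_iteratedDeriv (i : ℕ)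
        (by exact_mod_cast WithTop.coe_lt_top _)).differentiableAt.hasDerivAt)
  convert h using 1
  rw [Fin.sum_univ_castSucc, Finset.sum_eq_zero, zero_add, wronskianMinor]
  · congr 1
    ext i j
    refine Fin.lastCases ?_ (fun k => ?_) i
    · simp
    · rw [Matrix.updateRow_ne (Fin.castSucc_lt_last k).ne]
      simp
  · intro i _
    have hne : i.castSucc ≠ i.succ := (Fin.castSucc_lt_succ (i := i)).ne
    refine Matrix.det_zero_of_row_eq hne ?_
    rw [Matrix.updateRow_self, Matrix.updateRow_ne hne.symm]
    ext j
    simp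

/-- Cofactor expansion of `W_{m+1}(v, u₁, …, u_m)` along the column of `v`. -/
lemma det_cons_eq_sum {m : ℕ} (u : Fin m → ℝ → ℝ) (v : ℝ → ℝ) (t : ℝ) :
    (Matrix.of fun i k : Fin (m + 1) =>
      iteratedDeriv (i : ℕ) ((Fin.cons v u : Fin (m+1) → ℝ → ℝ) k) t).det
    = ∑ p ∈ Finset.range (m + 1), (-1) ^ p * iteratedDeriv p v t * wronskianMinor u p t := by
  rw [Matrix.det_succ_column_zero, ← Fin.sum_univ_eq_sum_range
    (fun p => (-1) ^ p * iteratedDeriv p v t * wronskianMinor u p t)]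
  refine Finset.sum_congr rfl fun p _ => ?_
  simp only [Matrix.of_apply, Fin.cons_zero, wronskianMinor]
  congr 2
  ext i j
  simp only [Matrix.submatrix_apply, Matrix.of_apply, Fin.cons_succ, Fin.succAbove, Fin.lt_def,
    Fin.val_castSucc]
  split_ifs <;> simp


/-- For smooth `u₁, …, uₙ` with constant nonzero Wronskian `W`, the operator
`Lu = (−1)ⁿ·W_{n+1}(u,u₁,…,uₙ)/W` annihilates each `uⱼ` and has the form
`Lu = u^{(n)} + Σ_{i≤n−2} bᵢ u^{(i)}` (principal symbol `1`, vanishing subprincipal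
symbol). -/
theorem stmt15 (n : ℕ) (hn : 2 ≤ n) (u : Fin n → ℝ → ℝ)
    (hu : ∀ j, ContDiff ℝ (⊤ : ℕ∞) (u j))
    (W : ℝ) (hW : W ≠ 0)
    (hWconst : ∀ t : ℝ,
      (Matrix.of fun i j : Fin n => iteratedDeriv (i : ℕ) (u j) t).det = W) :
    (∀ (j : Fin n) (t : ℝ),
      (-1 : ℝ) ^ n *
        (Matrix.of fun i k : Fin (n + 1) =>
          iteratedDeriv (i : ℕ) ((Fin.cons (u j) u : Fin (n+1) → ℝ → ℝ) k) t).det / W = 0) ∧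
    ∃ b : ℕ → ℝ → ℝ, ∀ v : ℝ → ℝ, ContDiff ℝ (↑n) v → ∀ t : ℝ,
      (-1 : ℝ) ^ n *
        (Matrix.of fun i k : Fin (n + 1) =>
          iteratedDeriv (i : ℕ) ((Fin.cons v u : Fin (n+1) → ℝ → ℝ) k) t).det / W
        = iteratedDeriv n v t
          + ∑ i ∈ Finset.range (n - 1), b i t * iteratedDeriv i v t := by
  refine ⟨fun j t => ?_, ?_⟩
  · rw [Matrix.det_zero_of_column_eq (Fin.succ_ne_zero j).symm (by intro k; simp)]
    simp
  obtain ⟨m, rfl⟩ : ∃ m, n = m + 2 := ⟨n - 2, by omega⟩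
  have htop : ∀ t, wronskianMinor u (m + 2) t = W := by
    intro t
    rw [← hWconst t, wronskianMinor]
    simp only [Fin.is_lt, if_true]
  have hsub : ∀ t, wronskianMinor u (m + 1) t = 0 := by
    intro t
    have h := hasDerivAt_wronskian u hu t
    simp only [hWconst] at h
    exact h.unique (hasDerivAt_const t W)
  have hsq : ((-1 : ℝ) ^ (m + 2)) * (-1) ^ (m + 2) = 1 := by
    rw [← mul_pow]; simp
  refine ⟨fun p t => (-1) ^ (m + 2) * (-1) ^ p * wronskianMinor u p t / W, fun v _ t => ?_⟩
  rw [det_cons_eq_sum, Finset.sum_range_succ, Finset.sum_range_succ, htop, hsub,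
    show m + 2 - 1 = m + 1 by omega, mul_zero, add_zero, mul_add, add_div, add_comm]
  congr 1
  · rw [div_eq_iff hW]
    linear_combination (iteratedDeriv (m + 2) v t * W) * hsq
  · rw [Finset.mul_sum, Finset.sum_div]
    exact Finset.sum_congr rfl fun p _ => by ring
end
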